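/- arXiv:0903.1532 — 2 statements merged into one kernel-verified Lean document; each statement's English description precedes it below -/
import Mathlib

section
/- The number of distinct global orbit patterns realized by functions in F_N is exactly 2^N − 1; that is, the set G(F_N) = { gop(f) : f ∈ F_N } has cardinality 2^N − 1. -/
/-!
The patterns on `N` points are exactly the compositions of the integers `1, …, N`, and an integer
`n + 1` has `2 ^ n` compositions.

The orders in the pattern of `f` add up to at most `N`, because the first `ω(x, f)` points of the
orbit of `x` are distinct and orbits in different components are disjoint. Conversely, a
composition of `n` with `0 < n ≤ N` is the pattern of the permutation of the first `n` points that
rotates each of its blocks, and giving each of the other `N - n` points the same image as the last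
of these `n` points does not change the pattern.
-/

open scoped Classical

/-- Two points are in the same component of `X_N` under `f`:
`x ~ y` iff some forward iterate of `x` equals some forward iterate of `y`. -/
def sameComp {N : ℕ} (f : Fin N → Fin N) (x y : Fin N) : Prop :=
  ∃ k l : ℕ, f^[k] x = f^[l] y

/-- The order `ω(x, f)` of a point `x`: the length of the periodic cycle contained in
the component of `x`, i.e. the least `p > 0` such that the orbit of `x` is eventually
`p`-periodic. -/
noncomputable def gopOrd {N : ℕ} (f : Fin N → Fin N) (x : Fin N) : ℕ :=
  sInf {p : ℕ | 0 < p ∧ ∃ K : ℕ, f^[K + p] x = f^[K] x}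

/-- The global orbit pattern of `f`: the list of orders of the least elements of the
components of `X_N` under `f`, listed in increasing order of those least elements. -/
noncomputable def gop {N : ℕ} (f : Fin N → Fin N) : List ℕ :=
  ((Finset.univ.filter (fun x : Fin N => ∀ y : Fin N, sameComp f x y → x ≤ y)).sort (· ≤ ·)).map
    (gopOrd f)

open Function

section Order

variable {n N : ℕ} (f : Fin N → Fin N) (x : Fin N)

theorem gopOrd_pos : 0 < gopOrd f x := by
  suffices h : {p : ℕ | 0 < p ∧ ∃ K : ℕ, f^[K + p] x = f^[K] x}.Nonempty from (Nat.sInf_mem h).1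
  obtain ⟨i, j, hij, h⟩ := Finite.exists_ne_map_eq_of_infinite fun k : ℕ => f^[k] x
  wlog hlt : i < j generalizing i j
  · exact this j i hij.symm h.symm (hij.lt_or_gt.resolve_left hlt)
  exact ⟨j - i, Nat.sub_pos_of_lt hlt, i, by rw [Nat.add_sub_cancel' hlt.le]; exact h.symm⟩

theorem injOn_iterate_Iio_gopOrd : (Set.Iio (gopOrd f x)).InjOn (f^[·] x) := by
  intro i hi j hj h
  wlog hlt : i < j generalizing i j
  · rcases (not_lt.1 hlt).eq_or_lt with rfl | hlt'
    · rfl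
    · exact (this hj hi h.symm hlt').symm
  have hle : gopOrd f x ≤ j - i :=
    Nat.sInf_le ⟨Nat.sub_pos_of_lt hlt, i, by rw [Nat.add_sub_cancel' hlt.le]; exact h.symm⟩
  exact absurd (hle.trans (Nat.sub_le j i)) (not_le.2 hj)

variable {f}

theorem gopOrd_map_of_injective {g : Fin n → Fin n} {e : Fin n → Fin N} (h : Semiconj e g f)
    (he : Injective e) (y : Fin n) : gopOrd f (e y) = gopOrd g y := by
  simp only [gopOrd, ← (h.iterate_right _).eq, he.eq_iff]

theorem gopOrd_eq_minimalPeriod (hf : Injective f) : gopOrd f x = minimalPeriod f x := by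
  simp only [gopOrd, iterate_add_apply, (hf.iterate _).eq_iff, exists_const,
    minimalPeriod_eq_sInf_n_pos_IsPeriodicPt, IsPeriodicPt, IsFixedPt]

end Order

section Components

variable {n N : ℕ} {f : Fin N → Fin N} {g : Fin n → Fin n}

theorem sameComp.symm {x y : Fin N} : sameComp f x y → sameComp f y x :=
  fun ⟨k, l, h⟩ => ⟨l, k, h.symm⟩

theorem sameComp.map {r : Fin N → Fin n} (hr : Semiconj r f g) {x y : Fin N} :
    sameComp f x y → sameComp g (r x) (r y) := by
  rintro ⟨k, l, h⟩
  exact ⟨k, l, by rw [← (hr.iterate_right k).eq, ← (hr.iterate_right l).eq, h]⟩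

theorem sameComp_id {x y : Fin N} : sameComp id x y ↔ x = y := by
  simp only [sameComp, iterate_id, id_eq, exists_const]

/-- The least elements of the components of `f`, at which `gop f` records the order. -/
noncomputable def componentMins (f : Fin N → Fin N) : Finset (Fin N) :=
  Finset.univ.filter fun x => ∀ y, sameComp f x y → x ≤ y

theorem gop_eq_map_sort_componentMins (f : Fin N → Fin N) :
    gop f = (componentMins f).sort.map (gopOrd f) := rfl

theorem mem_componentMins {x : Fin N} :
    x ∈ componentMins f ↔ ∀ y, sameComp f x y → x ≤ y := by
  simp only [componentMins, Finset.mem_filter_univ]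

theorem eq_of_sameComp_of_mem_componentMins {x y : Fin N} (hx : x ∈ componentMins f)
    (hy : y ∈ componentMins f) (h : sameComp f x y) : x = y :=
  (mem_componentMins.1 hx y h).antisymm (mem_componentMins.1 hy x h.symm)

theorem componentMins_id : componentMins (id : Fin N → Fin N) = Finset.univ := by
  ext x
  simp only [mem_componentMins, sameComp_id, Finset.mem_univ, iff_true]
  exact fun y h => h.le

theorem componentMins_eq_map (e : Fin n ↪o Fin N) {r : Fin N → Fin n} (hre : LeftInverse r e)
    (hle : ∀ x, e (r x) ≤ x) (hr : ∀ x y, sameComp f x y ↔ sameComp g (r x) (r y)) :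
    componentMins f = (componentMins g).map e.toEmbedding := by
  ext x
  simp only [mem_componentMins, Finset.mem_map, RelEmbedding.coe_toEmbedding]
  constructor
  · intro hx
    have hrx : e (r x) = x :=
      (hle x).antisymm (hx _ ((hr _ _).2 (by rw [hre]; exact ⟨0, 0, rfl⟩)))
    refine ⟨r x, fun z hz => ?_, hrx⟩
    rw [← e.le_iff_le, hrx]
    exact hx _ ((hr _ _).2 (by rwa [hre]))
  · rintro ⟨z, hz, rfl⟩ y hy
    have hzy : z ≤ r y := hz _ (by simpa only [hre z] using (hr _ _).1 hy)
    exact (e.monotone hzy).trans (hle y)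

theorem gop_eq_map_sort (e : Fin n ↪o Fin N) {s : Finset (Fin n)}
    (h : componentMins f = s.map e.toEmbedding) : gop f = s.sort.map (gopOrd f ∘ e) := by
  have hsort : s.sort.map e = (s.map e.toEmbedding).sort :=
    (e.strictMono.strictMonoOn _).map_finsetSort
  rw [gop_eq_map_sort_componentMins, h, ← hsort, List.map_map]

end Components

section Necessity

variable {N : ℕ} (f : Fin N → Fin N)

theorem gop_ne_nil (hN : 0 < N) : gop f ≠ [] := by
  have h0 : (⟨0, hN⟩ : Fin N) ∈ (componentMins f).sort :=
    (Finset.mem_sort _).2 (mem_componentMins.2 fun y _ => Nat.zero_le y)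
  rw [gop_eq_map_sort_componentMins, ne_eq, List.map_eq_nil_iff]
  exact List.ne_nil_of_mem h0

theorem pos_of_mem_gop {p : ℕ} (hp : p ∈ gop f) : 0 < p := by
  obtain ⟨x, -, rfl⟩ := List.mem_map.1 hp
  exact gopOrd_pos f x

theorem sum_gop : (gop f).sum = ∑ x ∈ componentMins f, gopOrd f x := by
  rw [gop_eq_map_sort_componentMins, ← List.sum_toFinset _ (Finset.sort_nodup _ _),
    Finset.sort_toFinset]

theorem sum_gop_le : (gop f).sum ≤ N := by
  let orbitPoint : (_ : Fin N) × ℕ → Fin N := fun q => f^[q.2] q.1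
  have hinj : Set.InjOn orbitPoint
      ((componentMins f).sigma fun x => Finset.range (gopOrd f x)) := by
    rintro ⟨x, i⟩ hxi ⟨y, j⟩ hyj h
    obtain ⟨hx, hi⟩ := Finset.mem_sigma.1 hxi
    obtain ⟨hy, hj⟩ := Finset.mem_sigma.1 hyj
    obtain rfl : x = y := eq_of_sameComp_of_mem_componentMins hx hy ⟨i, j, h⟩
    obtain rfl : i = j :=
      injOn_iterate_Iio_gopOrd f x (Finset.mem_range.1 hi) (Finset.mem_range.1 hj) h
    rfl
  calc (gop f).sum = ((componentMins f).sigma fun x => Finset.range (gopOrd f x)).card := by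
        simp only [sum_gop, Finset.card_sigma, Finset.card_range]
    _ ≤ (Finset.univ : Finset (Fin N)).card :=
        Finset.card_le_card_of_injOn orbitPoint (fun _ _ => Finset.mem_univ _) hinj
    _ = N := Finset.card_fin N

end Necessity

section Rotation

variable {n : ℕ}

theorem coe_iterate_finRotate (i : Fin n) (k : ℕ) :
    ((finRotate n)^[k] i : ℕ) = (i + k) % n := by
  have := i.neZero
  induction k with
  | zero => exact (Nat.mod_eq_of_lt i.2).symm
  | succ k ih =>
    rw [iterate_succ_apply', finRotate_apply, Fin.val_add, ih, Fin.val_one', ← Nat.add_mod,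
      add_assoc]

theorem sameComp_finRotate (i j : Fin n) : sameComp (finRotate n) i j :=
  ⟨j, i, Fin.ext (by rw [coe_iterate_finRotate, coe_iterate_finRotate, add_comm])⟩

theorem isPeriodicPt_finRotate_iff (i : Fin n) (k : ℕ) :
    IsPeriodicPt (finRotate n) k i ↔ n ∣ k := by
  rw [IsPeriodicPt, IsFixedPt, Fin.ext_iff, coe_iterate_finRotate]
  nth_rw 2 [← Nat.mod_eq_of_lt i.2]
  exact Nat.add_modEq_left_iff

theorem gopOrd_finRotate (i : Fin n) : gopOrd (finRotate n) i = n := by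
  rw [gopOrd_eq_minimalPeriod i (finRotate n).injective]
  exact Nat.dvd_antisymm ((isPeriodicPt_finRotate_iff i n).2 dvd_rfl).minimalPeriod_dvd
    ((isPeriodicPt_finRotate_iff i _).1 (isPeriodicPt_minimalPeriod _ i))

end Rotation

section Blocks

variable {n : ℕ} (c : Composition n)

/-- The permutation of `Fin n` rotating each block of `c` cyclically, whose pattern is `c`. -/
def blockRotation : Equiv.Perm (Fin n) :=
  c.blocksFinEquiv.permCongr (Equiv.Perm.sigmaCongrRight fun i => finRotate (c.blocksFun i))

/-- The left ends of the blocks of `c`: the least elements of the components of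
`blockRotation c`. -/
def blockStart : Fin c.length ↪o Fin n :=
  OrderEmbedding.ofStrictMono (fun i => c.embedding i ⟨0, c.one_le_blocksFun i⟩)
    fun _ _ hij => c.boundary.strictMono (Fin.castSucc_lt_castSucc_iff.2 hij)

theorem semiconj_embedding_blockRotation (i : Fin c.length) :
    Semiconj (c.embedding i) (finRotate (c.blocksFun i)) (blockRotation c) := by
  intro j
  have hsymm : c.blocksFinEquiv.symm (c.embedding i j) = ⟨i, j⟩ :=
    c.blocksFinEquiv.symm_apply_apply ⟨i, j⟩
  rw [blockRotation, Equiv.permCongr_apply, hsymm]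
  rfl

theorem gopOrd_blockRotation (x : Fin n) :
    gopOrd (blockRotation c) x = c.blocksFun (c.index x) := by
  obtain ⟨j, hj⟩ := c.mem_range_embedding x
  nth_rw 1 [← hj]
  rw [gopOrd_map_of_injective (semiconj_embedding_blockRotation c _) (c.embedding _).injective,
    gopOrd_finRotate]

theorem semiconj_index_blockRotation : Semiconj c.index (blockRotation c) id := by
  intro x
  obtain ⟨j, hj⟩ := c.mem_range_embedding x
  nth_rw 1 [← hj]
  rw [← (semiconj_embedding_blockRotation c _).eq, c.index_embedding, id_eq]

theorem sameComp_blockRotation_iff (x y : Fin n) :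
    sameComp (blockRotation c) x y ↔ c.index x = c.index y := by
  constructor
  · exact fun h => sameComp_id.1 (h.map (semiconj_index_blockRotation c))
  · intro h
    obtain ⟨i, hi⟩ := c.mem_range_embedding x
    obtain ⟨j, hj⟩ := h ▸ c.mem_range_embedding y
    rw [← hi, ← hj]
    exact (sameComp_finRotate i j).map (semiconj_embedding_blockRotation c _)

theorem componentMins_blockRotation :
    componentMins (blockRotation c) = Finset.univ.map (blockStart c).toEmbedding := by
  rw [← componentMins_id]
  exact componentMins_eq_map (blockStart c) (fun i => c.index_embedding i _) c.sizeUpTo_index_le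
    fun x y => (sameComp_blockRotation_iff c x y).trans sameComp_id.symm

theorem gop_blockRotation : gop (blockRotation c) = c.blocks := by
  have hord : gopOrd (blockRotation c) ∘ blockStart c = c.blocksFun := by
    ext i
    rw [comp_apply, gopOrd_blockRotation]
    exact congrArg c.blocksFun (c.index_embedding i _)
  rw [gop_eq_map_sort _ (componentMins_blockRotation c), hord, Fin.sort_univ, ← List.ofFn_eq_map,
    c.ofFn_blocksFun]

end Blocks

section Extension

theorem semiconj_section {α β : Type*} {e : α → β} {r : β → α} (g : α → α)
    (hre : LeftInverse r e) : Semiconj e g (e ∘ g ∘ r) := fun z => by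
  simp only [comp_apply, hre z]

theorem semiconj_retraction {α β : Type*} {e : α → β} {r : β → α} (g : α → α)
    (hre : LeftInverse r e) : Semiconj r (e ∘ g ∘ r) g :=
  fun x => hre (g (r x))

variable {n N : ℕ} {r : Fin N → Fin n} (g : Fin n → Fin n)

theorem sameComp_comp_comp_iff {e : Fin n → Fin N} (hre : LeftInverse r e) (x y : Fin N) :
    sameComp (e ∘ g ∘ r) x y ↔ sameComp g (r x) (r y) := by
  refine ⟨fun h => h.map (semiconj_retraction g hre), ?_⟩
  rintro ⟨k, l, h⟩
  have hiter : ∀ m z, (e ∘ g ∘ r)^[m + 1] z = e (g (g^[m] (r z))) := fun m z => by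
    rw [iterate_succ_apply', comp_apply, comp_apply,
      ((semiconj_retraction g hre).iterate_right m).eq]
  exact ⟨k + 1, l + 1, by rw [hiter, hiter, h]⟩

theorem gop_comp_comp (e : Fin n ↪o Fin N) (hre : LeftInverse r e) (hle : ∀ x, e (r x) ≤ x) :
    gop (e ∘ g ∘ r) = gop g := by
  rw [gop_eq_map_sort e (componentMins_eq_map e hre hle (sameComp_comp_comp_iff g hre)),
    gop_eq_map_sort_componentMins]
  exact congrArg (List.map · _)
    (funext (gopOrd_map_of_injective (semiconj_section g hre) e.injective))

end Extension

theorem exists_gop_eq_blocks {n N : ℕ} (h : n + 1 ≤ N) (c : Composition (n + 1)) :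
    ∃ f : Fin N → Fin N, gop f = c.blocks := by
  let e : Fin (n + 1) ↪o Fin N := Fin.castLEOrderEmb h
  let r : Fin N → Fin (n + 1) := fun x => Fin.clamp x n
  have hre : LeftInverse r e := fun z => Fin.ext (min_eq_left (Nat.le_of_lt_succ z.2))
  have hle : ∀ x, e (r x) ≤ x := fun x => min_le_left (x : ℕ) n
  exact ⟨e ∘ blockRotation c ∘ r, (gop_comp_comp _ e hre hle).trans (gop_blockRotation c)⟩

theorem range_gop {N : ℕ} (hN : 0 < N) :
    Set.range (fun f : Fin N → Fin N => gop f) =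
      Set.range fun c : Σ k : Fin N, Composition (k + 1) => c.2.blocks := by
  apply Set.Subset.antisymm
  · rintro _ ⟨f, rfl⟩
    obtain ⟨k, hk⟩ : ∃ k, (gop f).sum = k + 1 :=
      Nat.exists_eq_succ_of_ne_zero
        (List.sum_pos _ (fun _ => pos_of_mem_gop f) (gop_ne_nil f hN)).ne'
    exact ⟨⟨⟨k, hk.symm.trans_le (sum_gop_le f)⟩, ⟨gop f, pos_of_mem_gop f, hk⟩⟩, rfl⟩
  · rintro _ ⟨⟨k, c⟩, rfl⟩
    exact exists_gop_eq_blocks k.2 c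

theorem ncard_range_sigma_blocks (N : ℕ) :
    (Set.range fun c : Σ k : Fin N, Composition (k + 1) => c.2.blocks).ncard = 2 ^ N - 1 := by
  have hinj : Injective fun c : Σ k : Fin N, Composition (k + 1) => c.2.blocks := by
    rintro ⟨k, c⟩ ⟨l, d⟩ h
    obtain rfl : k = l := by
      have hsum := congrArg List.sum h
      simp only [Composition.blocks_sum, Nat.add_right_cancel_iff] at hsum
      exact Fin.ext hsum
    exact congrArg (Sigma.mk k) (Composition.ext h)
  calc (Set.range fun c : Σ k : Fin N, Composition (k + 1) => c.2.blocks).ncard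
      = Nat.card (Σ k : Fin N, Composition (k + 1)) := Set.ncard_range_of_injective hinj
    _ = ∑ k : Fin N, 2 ^ (k : ℕ) := by
        simp only [Nat.card_eq_fintype_card, Fintype.card_sigma, composition_card,
          Nat.add_sub_cancel]
    _ = 2 ^ N - 1 := by
        rw [Fin.sum_univ_eq_sum_range (2 ^ ·), Nat.geomSum_eq le_rfl, Nat.div_one]

/-- the set `G(F_N) = { gop f : f ∈ F_N }` of global orbit patterns realized
by functions in `F_N` has cardinality exactly `2^N − 1`. -/
theorem ncard_range_gop (N : ℕ) (hN : 0 < N) :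
    (Set.range (fun f : Fin N → Fin N => gop f)).ncard = 2 ^ N - 1 := by
  rw [range_gop hN, ncard_range_sigma_blocks]
end

section
/- For every integer k with 1 ≤ k ≤ N, the number of functions f ∈ F_N whose global orbit pattern is the sequence [1, 1, …, 1] consisting of k ones (equivalently: f has exactly k fixed points and every periodic point of f is a fixed point) equals C(N−1, N−k) · N^{N−k}. -/
open scoped Classical

/-!
A function whose global orbit pattern is `[1, …, 1]` is the parent map of a rooted forest whose
roots are its fixed points, one for each entry of the pattern. Forests are counted by Pitman's
double counting. Let `T k` be the number of forests with `k` roots on `N` vertices. Detaching a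
non-root from its parent turns a forest with `k` roots into one with `k + 1` roots; conversely,
given a forest with `k + 1` roots and a vertex `v`, any of the `k` roots of trees not containing
`v` may be attached to `v`. Hence `T k * (N - k) = T (k + 1) * (N * k)`, and the formula follows
by descending from `T N = 1`.
-/

section RootedForest

open Finset Function

variable {α : Type*} {f g : α → α} {x y r v : α}

/-- `f` is the parent map of a rooted forest: every orbit of `f` reaches a fixed point. The roots
of the forest are the fixed points of `f`. -/
def IsRootedForest (f : α → α) : Prop :=
  ∀ x, ∃ n, IsFixedPt f (f^[n] x)

/-- The distance from `x` to the root of its tree, with junk value `0` if the orbit of `x` reaches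
no fixed point. -/
noncomputable def treeDepth (f : α → α) (x : α) : ℕ :=
  sInf {n | IsFixedPt f (f^[n] x)}

/-- The root of the tree containing `x`, with junk value `x` if the orbit of `x` reaches no fixed
point. -/
noncomputable def treeRoot (f : α → α) (x : α) : α :=
  f^[treeDepth f x] x

theorem isFixedPt_treeRoot_of_iterate {n : ℕ} (h : IsFixedPt f (f^[n] x)) :
    IsFixedPt f (treeRoot f x) :=
  Nat.sInf_mem (s := {n | IsFixedPt f (f^[n] x)}) ⟨n, h⟩

theorem treeRoot_eq_iterate {n : ℕ} (h : IsFixedPt f (f^[n] x)) : treeRoot f x = f^[n] x := by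
  obtain ⟨d, rfl⟩ := Nat.exists_eq_add_of_le' (Nat.sInf_le h : treeDepth f x ≤ n)
  rw [iterate_add_apply]
  exact ((isFixedPt_treeRoot_of_iterate h).iterate d).symm

theorem treeRoot_eq_self (h : IsFixedPt f r) : treeRoot f r = r :=
  treeRoot_eq_iterate (n := 0) h

theorem IsRootedForest.isFixedPt_treeRoot (hf : IsRootedForest f) (x : α) :
    IsFixedPt f (treeRoot f x) :=
  let ⟨_, h⟩ := hf x
  isFixedPt_treeRoot_of_iterate h

theorem IsRootedForest.treeRoot_iterate (hf : IsRootedForest f) (n : ℕ) (x : α) :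
    treeRoot f (f^[n] x) = treeRoot f x := by
  obtain ⟨m, hm⟩ := hf (f^[n] x)
  rw [treeRoot_eq_iterate hm]
  rw [← iterate_add_apply] at hm ⊢
  exact (treeRoot_eq_iterate hm).symm

theorem IsRootedForest.treeDepth_apply_lt (hf : IsRootedForest f) (hx : f x ≠ x) :
    treeDepth f (f x) < treeDepth f x := by
  have hroot : IsFixedPt f (f^[treeDepth f x] x) := hf.isFixedPt_treeRoot x
  cases hd : treeDepth f x with
  | zero =>
    rw [hd] at hroot
    exact absurd hroot hx
  | succ d =>
    rw [hd, iterate_succ_apply] at hroot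
    exact Nat.lt_succ_of_le (Nat.sInf_le hroot)

theorem IsRootedForest.of_apply_lt {β : Type*} [Preorder β] [WellFoundedLT β] (h : α → β)
    (hlt : ∀ x, f x ≠ x → h (f x) < h x) : IsRootedForest f := by
  intro x
  induction x using (InvImage.wf h wellFounded_lt).induction with
  | _ x ih =>
    by_cases hx : f x = x
    · exact ⟨0, hx⟩
    · obtain ⟨n, hn⟩ := ih (f x) (hlt x hx)
      exact ⟨n + 1, hn⟩

theorem IsRootedForest.detach (hf : IsRootedForest f) (x : α) :
    IsRootedForest (update f x x) := by
  refine .of_apply_lt (treeDepth f) fun y hy => ?_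
  have hyx : y ≠ x := by
    rintro rfl
    exact hy (update_self ..)
  rw [update_of_ne hyx] at hy ⊢
  exact hf.treeDepth_apply_lt hy

theorem IsRootedForest.treeRoot_detach_ne (hf : IsRootedForest f) (hx : f x ≠ x) :
    treeRoot (update f x x) (f x) ≠ x := by
  have hle (y : α) : treeDepth f (update f x x y) ≤ treeDepth f y := by
    rcases eq_or_ne y x with rfl | hyx
    · rw [update_self]
    rw [update_of_ne hyx]
    rcases eq_or_ne (f y) y with hy | hy
    · rw [hy]
    · exact (hf.treeDepth_apply_lt hy).le
  have hanti : Antitone fun n => treeDepth f ((update f x x)^[n] (f x)) :=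
    antitone_nat_of_succ_le fun n => by
      rw [iterate_succ_apply']
      exact hle _
  intro hroot
  have hxle : treeDepth f (treeRoot (update f x x) (f x)) ≤ treeDepth f (f x) :=
    hanti (Nat.zero_le _)
  rw [hroot] at hxle
  exact hxle.not_gt (hf.treeDepth_apply_lt hx)

theorem IsRootedForest.attach (hg : IsRootedForest g) (hr : IsFixedPt g r)
    (hv : treeRoot g v ≠ r) : IsRootedForest (update g r v) := by
  -- Lifting the tree of `r` above the height of `v` makes the height decrease along `r ↦ v`.
  refine .of_apply_lt
    (fun y => treeDepth g y + if treeRoot g y = r then treeDepth g v + 1 else 0) fun y hy => ?_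
  rcases eq_or_ne y r with rfl | hyr
  · simp only [update_self, hv, treeRoot_eq_self hr, if_true, if_false]
    omega
  · rw [update_of_ne hyr] at hy ⊢
    simp only [show treeRoot g (g y) = treeRoot g y from hg.treeRoot_iterate 1 y]
    exact Nat.add_lt_add_right (hg.treeDepth_apply_lt hy) _

variable [Fintype α]

/-- The roots of the forest with parent map `f`, i.e. the fixed points of `f`, as a `Finset`. -/
noncomputable def roots (f : α → α) : Finset α :=
  {x | IsFixedPt f x}

theorem mem_roots : x ∈ roots f ↔ IsFixedPt f x := by
  simp [roots]

theorem roots_detach (f : α → α) (x : α) :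
    roots (update f x x) = insert x (roots f) := by
  ext y
  rcases eq_or_ne y x with rfl | hyx <;> simp [mem_roots, IsFixedPt, *]

theorem roots_attach (hv : v ≠ r) (g : α → α) :
    roots (update g r v) = (roots g).erase r := by
  ext y
  rcases eq_or_ne y r with rfl | hyr <;> simp [mem_roots, IsFixedPt, *]

variable (α) in
/-- The rooted forests with vertex set `α` and exactly `k` roots, given by their parent maps. -/
noncomputable def rootedForests (k : ℕ) : Finset (α → α) :=
  {f | IsRootedForest f ∧ #(roots f) = k}

variable {k : ℕ}

theorem mem_rootedForests : f ∈ rootedForests α k ↔ IsRootedForest f ∧ #(roots f) = k := by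
  simp [rootedForests]

theorem detach_mem_rootedForests (hf : f ∈ rootedForests α k) (hx : f x ≠ x) :
    update f x x ∈ rootedForests α (k + 1) := by
  obtain ⟨hforest, hcard⟩ := mem_rootedForests.mp hf
  refine mem_rootedForests.mpr ⟨hforest.detach x, ?_⟩
  rw [roots_detach, card_insert_of_notMem (mt mem_roots.mp hx), hcard]

theorem attach_mem_rootedForests (hg : g ∈ rootedForests α (k + 1)) (hr : IsFixedPt g r)
    (hv : treeRoot g v ≠ r) : update g r v ∈ rootedForests α k := by
  obtain ⟨hforest, hcard⟩ := mem_rootedForests.mp hg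
  have hvr : v ≠ r := by
    rintro rfl
    exact hv (treeRoot_eq_self hr)
  refine mem_rootedForests.mpr ⟨hforest.attach hr hv, ?_⟩
  rw [roots_attach hvr, card_erase_of_mem (mem_roots.mpr hr), hcard, Nat.add_sub_cancel]

variable (α)

theorem sum_card_compl_roots (k : ℕ) :
    ∑ f ∈ rootedForests α k, #(roots f)ᶜ =
      ∑ g ∈ rootedForests α (k + 1), ∑ v, #((roots g).erase (treeRoot g v)) := by
  simp only [← card_sigma]
  refine card_nbij' (fun p => ⟨update p.1 p.2 p.2, p.1 p.2, p.2⟩)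
    (fun q => ⟨update q.1 q.2.2 q.2.1, q.2.2⟩) ?_ ?_ ?_ ?_
  · rintro ⟨f, x⟩ hfx
    simp only [coe_sigma, Set.mem_sigma_iff, mem_coe, mem_compl, mem_roots, mem_erase, mem_univ,
      true_and] at hfx ⊢
    obtain ⟨hf, hx⟩ := hfx
    exact ⟨detach_mem_rootedForests hf hx,
      ((mem_rootedForests.mp hf).1.treeRoot_detach_ne hx).symm, update_self ..⟩
  · rintro ⟨g, v, r⟩ hgvr
    simp only [coe_sigma, Set.mem_sigma_iff, mem_coe, mem_compl, mem_roots, mem_erase, mem_univ,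
      true_and] at hgvr ⊢
    obtain ⟨hg, hvr, hr⟩ := hgvr
    refine ⟨attach_mem_rootedForests hg hr hvr.symm, ?_⟩
    rw [IsFixedPt, update_self]
    rintro rfl
    exact hvr (treeRoot_eq_self hr).symm
  · rintro ⟨f, x⟩ -
    simp
  · rintro ⟨g, v, r⟩ hgvr
    simp only [coe_sigma, Set.mem_sigma_iff, mem_coe, mem_roots, mem_erase] at hgvr
    have hr : update g r r = g := update_eq_self_iff.mpr hgvr.2.2.2.symm
    simp only [update_idem, update_self, hr]

theorem card_rootedForests_mul (k : ℕ) :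
    #(rootedForests α k) * (Fintype.card α - k) =
      #(rootedForests α (k + 1)) * (Fintype.card α * k) := by
  have hcompl : ∀ f ∈ rootedForests α k, #(roots f)ᶜ = Fintype.card α - k := fun f hf => by
    rw [card_compl, (mem_rootedForests.mp hf).2]
  have herase : ∀ g ∈ rootedForests α (k + 1), ∀ v, #((roots g).erase (treeRoot g v)) = k := by
    intro g hg v
    obtain ⟨hforest, hcard⟩ := mem_rootedForests.mp hg
    rw [card_erase_of_mem (mem_roots.mpr (hforest.isFixedPt_treeRoot v)), hcard,
      Nat.add_sub_cancel]
  calc #(rootedForests α k) * (Fintype.card α - k)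
    _ = ∑ f ∈ rootedForests α k, #(roots f)ᶜ := (sum_const_nat hcompl).symm
    _ = ∑ g ∈ rootedForests α (k + 1), ∑ v, #((roots g).erase (treeRoot g v)) :=
      sum_card_compl_roots α k
    _ = #(rootedForests α (k + 1)) * (Fintype.card α * k) :=
      sum_const_nat fun g hg => sum_const_nat fun v _ => herase g hg v

theorem rootedForests_card : rootedForests α (Fintype.card α) = {id} := by
  ext f
  rw [mem_rootedForests, card_eq_iff_eq_univ, mem_singleton]
  constructor
  · rintro ⟨-, hroots⟩
    exact funext fun x => mem_roots.mp (hroots ▸ mem_univ x)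
  · rintro rfl
    exact ⟨fun x => ⟨0, rfl⟩, eq_univ_of_forall fun x => mem_roots.mpr rfl⟩

variable {α}

theorem card_rootedForests {j : ℕ} (hkj : k + j = Fintype.card α) :
    #(rootedForests α k) = (Fintype.card α - 1).choose j * Fintype.card α ^ j := by
  induction j generalizing k with
  | zero =>
    obtain rfl : k = Fintype.card α := hkj
    simp [rootedForests_card]
  | succ j ih =>
    set N := Fintype.card α
    have hchoose : (N - 1).choose (j + 1) * (j + 1) = (N - 1).choose j * k := by
      rw [Nat.choose_succ_right_eq, show N - 1 - j = k by omega]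
    apply Nat.eq_of_mul_eq_mul_right j.succ_pos
    calc #(rootedForests α k) * (j + 1)
      _ = #(rootedForests α k) * (N - k) := by rw [show N - k = j + 1 by omega]
      _ = #(rootedForests α (k + 1)) * (N * k) := card_rootedForests_mul α k
      _ = (N - 1).choose j * N ^ j * (N * k) := by rw [ih (by omega)]
      _ = (N - 1).choose j * k * N ^ (j + 1) := by ring
      _ = (N - 1).choose (j + 1) * N ^ (j + 1) * (j + 1) := by rw [← hchoose]; ring

end RootedForest

section GlobalOrbitPattern

open Finset Function

variable {N : ℕ} {f : Fin N → Fin N} {x y : Fin N}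

theorem sameComp_equivalence (f : Fin N → Fin N) : Equivalence (sameComp f) where
  refl _ := ⟨0, 0, rfl⟩
  symm := fun ⟨k, l, h⟩ => ⟨l, k, h.symm⟩
  trans := by
    rintro x y z ⟨k, l, hxy⟩ ⟨m, n, hyz⟩
    refine ⟨m + k, l + n, ?_⟩
    calc f^[m + k] x
      _ = f^[m] (f^[l] y) := by rw [iterate_add_apply, hxy]
      _ = f^[l] (f^[m] y) := (Function.Commute.iterate_iterate_self f m l).eq y
      _ = f^[l + n] z := by rw [hyz, iterate_add_apply]

theorem sameComp.exists_isFixedPt_iterate (hxy : sameComp f x y)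
    (hx : ∃ n, IsFixedPt f (f^[n] x)) : ∃ n, IsFixedPt f (f^[n] y) := by
  obtain ⟨k, l, hkl⟩ := hxy
  obtain ⟨n, hn⟩ := hx
  refine ⟨n + l, ?_⟩
  rw [iterate_add_apply, ← hkl, (Function.Commute.iterate_iterate_self f n k).eq x, hn.iterate k]
  exact hn

theorem IsRootedForest.sameComp_iff (hf : IsRootedForest f) :
    sameComp f x y ↔ treeRoot f x = treeRoot f y := by
  constructor
  · rintro ⟨k, l, hkl⟩
    rw [← hf.treeRoot_iterate k x, hkl, hf.treeRoot_iterate]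
  · exact fun h => ⟨treeDepth f x, treeDepth f y, h⟩

theorem gopOrd_eq_one_iff : gopOrd f x = 1 ↔ ∃ n, IsFixedPt f (f^[n] x) := by
  have hmem : 1 ∈ {p | 0 < p ∧ ∃ K, f^[K + p] x = f^[K] x} ↔ ∃ n, IsFixedPt f (f^[n] x) := by
    simp only [Set.mem_ofPred_eq, one_pos, true_and, iterate_succ_apply', IsFixedPt]
  rw [← hmem, gopOrd]
  constructor
  · intro h
    exact h ▸ Nat.sInf_mem (Nat.nonempty_of_sInf_eq_succ h)
  · intro h
    exact le_antisymm (Nat.sInf_le h) (Nat.sInf_mem ⟨1, h⟩).1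

/-- The least elements of the components of `f`, which index the entries of `gop f`. -/
noncomputable def compMins (f : Fin N → Fin N) : Finset (Fin N) :=
  {x | ∀ y, sameComp f x y → x ≤ y}

theorem mem_compMins : x ∈ compMins f ↔ ∀ y, sameComp f x y → x ≤ y := by
  simp [compMins]

theorem exists_mem_compMins_sameComp (f : Fin N → Fin N) (x : Fin N) :
    ∃ m ∈ compMins f, sameComp f m x := by
  have hequiv := sameComp_equivalence f
  obtain ⟨m, hmx, hmin⟩ := WellFounded.has_min wellFounded_lt {y | sameComp f y x}
    ⟨x, hequiv.refl x⟩
  exact ⟨m, mem_compMins.mpr fun y hmy =>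
    not_lt.mp (hmin y (hequiv.trans (hequiv.symm hmy) hmx)), hmx⟩

theorem IsRootedForest.card_compMins (hf : IsRootedForest f) :
    #(compMins f) = #(roots f) := by
  refine card_nbij (treeRoot f) (fun x _ => ?_) (fun x hx y hy hxy => ?_) fun r hr => ?_
  · exact mem_roots.mpr (hf.isFixedPt_treeRoot x)
  · exact le_antisymm (mem_compMins.mp hx y (hf.sameComp_iff.mpr hxy))
      (mem_compMins.mp hy x (hf.sameComp_iff.mpr hxy.symm))
  · obtain ⟨m, hm, hmr⟩ := exists_mem_compMins_sameComp f r
    exact ⟨m, hm, (hf.sameComp_iff.mp hmr).trans (treeRoot_eq_self (mem_roots.mp hr))⟩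

theorem isRootedForest_iff_gopOrd_eq_one :
    IsRootedForest f ↔ ∀ x ∈ compMins f, gopOrd f x = 1 := by
  simp only [gopOrd_eq_one_iff]
  refine ⟨fun hf x _ => hf x, fun hmins x => ?_⟩
  obtain ⟨m, hm, hmx⟩ := exists_mem_compMins_sameComp f x
  exact hmx.exists_isFixedPt_iterate (hmins m hm)

theorem gop_eq_replicate_one_iff {k : ℕ} :
    gop f = List.replicate k 1 ↔ f ∈ rootedForests (Fin N) k := by
  calc gop f = List.replicate k 1
    _ ↔ #(compMins f) = k ∧ ∀ x ∈ compMins f, gopOrd f x = 1 := by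
      rw [List.eq_replicate_iff]
      simp [gop, compMins]
    _ ↔ IsRootedForest f ∧ #(compMins f) = k := by
      rw [and_comm, isRootedForest_iff_gopOrd_eq_one]
    _ ↔ IsRootedForest f ∧ #(roots f) = k :=
      and_congr_right fun hf => by rw [hf.card_compMins]
    _ ↔ f ∈ rootedForests (Fin N) k := mem_rootedForests.symm

end GlobalOrbitPattern

/-- for `1 ≤ k ≤ N`, the number of `f ∈ F_N` whose global orbit pattern is
`[1, 1, …, 1]` (`k` ones) equals `C(N−1, N−k) · N^{N−k}`. -/
theorem card_gop_replicate_one (N k : ℕ) (hk : 1 ≤ k) (hkN : k ≤ N) :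
    Nat.card {f : Fin N → Fin N // gop f = List.replicate k 1}
      = (N - 1).choose (N - k) * N ^ (N - k) := by
  obtain ⟨j, rfl⟩ := Nat.exists_eq_add_of_le hkN
  calc Nat.card {f : Fin (k + j) → Fin (k + j) // gop f = List.replicate k 1}
    _ = (rootedForests (Fin (k + j)) k).card :=
      Nat.subtype_card _ fun _ => gop_eq_replicate_one_iff.symm
    _ = (k + j - 1).choose j * (k + j) ^ j := by
      simpa using card_rootedForests (Fintype.card_fin (k + j)).symm
    _ = (k + j - 1).choose (k + j - k) * (k + j) ^ (k + j - k) := by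
      rw [Nat.add_sub_cancel_left]
end
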